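/- arXiv:1210.0401 — 2 statements merged into one kernel-verified Lean document; each statement's English description precedes it below -/
import Mathlib

section
/- Let V₁ be a real inner product space of dimension 2m with a Hermitian structure J, let V₂ be a finite-dimensional real inner product space, and let F : V₁ → V₂ be a linear map whose restriction to (ker F)⊥ is an isometry onto range F (the pointwise Riemannian-map condition). Suppose ker F is anti-invariant, i.e. J(ker F) ⊆ (ker F)⊥. Then ker F is Lagrangian, i.e. J(ker F) = (ker F)⊥, if and only if dim(range F) = m. (Proposition 3.2.) -/
open scoped RealInnerProductSpace

/-- **Proposition 3.2.** Let `V₁` be a real inner product space of dimension `2*m` with a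
Hermitian structure `J`, `V₂` a finite-dimensional real inner product space, and
`F : V₁ → V₂` a linear map whose restriction to `(ker F)ᗮ` is an isometry onto `range F`
(the pointwise Riemannian-map condition).  Suppose `ker F` is anti-invariant:
`J(ker F) ⊆ (ker F)ᗮ`.  Then `ker F` is Lagrangian, i.e. `J(ker F) = (ker F)ᗮ`,
if and only if `dim (range F) = m`. -/
theorem lagrangian_iff_range_dim
    {V₁ : Type*} [NormedAddCommGroup V₁] [InnerProductSpace ℝ V₁] [FiniteDimensional ℝ V₁]
    {V₂ : Type*} [NormedAddCommGroup V₂] [InnerProductSpace ℝ V₂] [FiniteDimensional ℝ V₂]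
    (m : ℕ) (hV₁ : Module.finrank ℝ V₁ = 2 * m)
    (J : V₁ →ₗ[ℝ] V₁)
    (hJ2 : ∀ x : V₁, J (J x) = -x)
    (hJiso : ∀ x y : V₁, ⟪J x, J y⟫ = ⟪x, y⟫)
    (F : V₁ →ₗ[ℝ] V₂)
    (hRiem : ∀ x ∈ (LinearMap.ker F)ᗮ, ∀ y ∈ (LinearMap.ker F)ᗮ, ⟪F x, F y⟫ = ⟪x, y⟫)
    (hanti : (LinearMap.ker F).map J ≤ (LinearMap.ker F)ᗮ) :
    (LinearMap.ker F).map J = (LinearMap.ker F)ᗮ ↔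
      Module.finrank ℝ (LinearMap.range F) = m := by
  have hinj : Function.Injective J := by
    intro x y h
    have h2 := congrArg J h
    rw [hJ2, hJ2] at h2
    exact neg_injective h2
  have h1 : Module.finrank ℝ ((LinearMap.ker F).map J) = Module.finrank ℝ (LinearMap.ker F) :=
    (Submodule.equivMapOfInjective J hinj (LinearMap.ker F)).finrank_eq.symm
  have h2 := F.finrank_range_add_finrank_ker
  have h3 := (LinearMap.ker F).finrank_add_finrank_orthogonal
  constructor
  · intro h
    rw [h] at h1
    omega
  · intro h
    exact Submodule.eq_of_le_of_finrank_eq hanti (by omega)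
end

section
/- Let V be a finite-dimensional real inner product space with a Hermitian structure J, and let W be a Lagrangian subspace of V (i.e. J(W) = W⊥) with dim W > 1. Suppose H ∈ W⊥ satisfies ⟨H, JY⟩⟨X, X⟩ = ⟨X, Y⟩⟨H, JX⟩ for all X, Y ∈ W. Then H = 0. (The key algebraic step in the proof of Theorem 4.2: a Lagrangian Riemannian map with totally umbilical fibers from a Kähler manifold has vanishing mean curvature vector of the fibers when dim(ker F∗) > 1.) -/
open scoped RealInnerProductSpace

/-- **Key algebraic step in Theorem 4.2.** Let `V` be a finite-dimensional real inner product
space with a Hermitian structure `J`, and `W` a Lagrangian subspace (`J(W) = Wᗮ`) with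
`dim W > 1`.  Suppose `H ∈ Wᗮ` satisfies `⟪H, J Y⟫ * ⟪X, X⟫ = ⟪X, Y⟫ * ⟪H, J X⟫` for all
`X, Y ∈ W`.  Then `H = 0`. -/
theorem lagrangian_umbilical_H_zero
    {V : Type*} [NormedAddCommGroup V] [InnerProductSpace ℝ V] [FiniteDimensional ℝ V]
    (J : V →ₗ[ℝ] V)
    (hJ2 : ∀ x : V, J (J x) = -x)
    (hJiso : ∀ x y : V, ⟪J x, J y⟫ = ⟪x, y⟫)
    (W : Submodule ℝ V)
    (hLag : W.map J = Wᗮ)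
    (hdim : 1 < Module.finrank ℝ W)
    (H : V) (hH : H ∈ Wᗮ)
    (hcond : ∀ X ∈ W, ∀ Y ∈ W, ⟪H, J Y⟫ * ⟪X, X⟫ = ⟪X, Y⟫ * ⟪H, J X⟫) :
    H = 0 := by
  obtain ⟨Z, hZ, rfl⟩ : H ∈ W.map J := hLag ▸ hH
  have hker : LinearMap.ker ((innerₛₗ ℝ Z).comp W.subtype) ≠ ⊥ :=
    LinearMap.ker_ne_bot_of_finrank_lt (by simpa using hdim)
  obtain ⟨X, hX, hX0⟩ := Submodule.exists_mem_ne_zero_of_ne_bot hker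
  have hZX : ⟪Z, (X : V)⟫ = 0 := by simpa using hX
  have h := hcond X X.2 Z hZ
  rw [hJiso, hJiso, hZX, mul_zero] at h
  rcases mul_eq_zero.1 h with h | h
  · rw [inner_self_eq_zero.1 h, map_zero]
  · exact absurd (Subtype.ext (inner_self_eq_zero.1 h)) hX0
end
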